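/- arXiv:2005.14353 — 2 statements merged into one kernel-verified Lean document; each statement's English description precedes it below -/
import Mathlib

section
/- Let A be a real m×n matrix and b ∈ ℝ^m such that the polyhedron P = {d ∈ ℝ^n : A·d ≤ b} is nonempty. Let η₀ ∈ ℝ^p, let H be a real p×n matrix, and let u ∈ ℝ^p, v ∈ ℝ^n, h ∈ ℝ. Then the robust constraint u·(η₀ + H·d) + v·d ≤ h holds for every d ∈ P if and only if there exists λ ∈ ℝ^m with λ ≥ 0, Aᵀ·λ = Hᵀ·u + v, and u·η₀ + b·λ ≤ h. -/
/-!
The statement is the affine form of Farkas' lemma. With `w = Hᵀ u + v` and `β = h - u ⬝ᵥ η₀`, the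
robust constraint says that `A d ≤ b` implies `w ⬝ᵥ d ≤ β`. Since the polyhedron is nonempty, this
is equivalent to its homogenization on pairs `(d, t)`: `A d ≤ t b` and `0 ≤ t` imply
`w ⬝ᵥ d ≤ t β` (the case `t = 0` says that `w` is nonpositive on the recession cone, which follows
by moving far along a recession direction from a feasible point). The homogeneous Farkas lemma
`farkas_functionals`, valid for finitely many linear functionals on any real vector space, then
expresses `(d, t) ↦ w ⬝ᵥ d - t β` as a nonnegative combination of the constraint functionals; the
multipliers of the rows of `A d - t b ≤ 0` form `lam`, and the multiplier of `-t ≤ 0` is the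
slack in `b ⬝ᵥ lam ≤ β`.
-/

open Matrix

/-- Homogeneous Farkas lemma, by induction on the number of functionals. If the first functional
`a 0` cannot be dropped, there is `x₀` with `a i x₀ ≤ 0` for the others, `c x₀ > 0` and, after
scaling, `a 0 x₀ = 1`; the induction hypothesis applies to the functionals composed with the
projection `x ↦ x - a 0 x • x₀` onto the kernel of `a 0`. -/
theorem farkas_functionals {V : Type*} [AddCommGroup V] [Module ℝ V] :
    ∀ (m : ℕ) (a : Fin m → V →ₗ[ℝ] ℝ) (c : V →ₗ[ℝ] ℝ),
      (∀ x, (∀ i, a i x ≤ 0) → c x ≤ 0) →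
      ∃ lam : Fin m → ℝ, 0 ≤ lam ∧ ∀ x, c x = ∑ i, lam i * a i x := by
  intro m
  induction m with
  | zero =>
    intro a c hc
    refine ⟨0, le_rfl, fun x => ?_⟩
    have h1 := hc x (fun i => i.elim0)
    have h2 := hc (-x) (fun i => i.elim0)
    rw [map_neg] at h2
    simp only [Finset.univ_eq_empty, Finset.sum_empty]
    linarith
  | succ m ih =>
    intro a c hc
    by_cases hdrop : ∀ x, (∀ i : Fin m, a i.succ x ≤ 0) → c x ≤ 0
    · obtain ⟨lam, hlam, hsum⟩ := ih (fun i => a i.succ) c hdrop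
      refine ⟨Fin.cons 0 lam, fun i => ?_, fun x => ?_⟩
      · refine Fin.cases ?_ (fun j => ?_) i
        · simp
        · simpa using hlam j
      · simp [Fin.sum_univ_succ, hsum x]
    · push Not at hdrop
      obtain ⟨z, hz, hcz⟩ := hdrop
      have hpos : 0 < a 0 z := by
        by_contra hneg
        exact absurd (hc z (Fin.cases (not_lt.mp hneg) hz)) (not_le.mpr hcz)
      obtain ⟨x₀, hx₀, hcx₀, hone⟩ :
          ∃ x₀, (∀ i : Fin m, a i.succ x₀ ≤ 0) ∧ 0 < c x₀ ∧ a 0 x₀ = 1 := by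
        refine ⟨(a 0 z)⁻¹ • z, fun i => ?_, ?_, ?_⟩
        · rw [map_smul, smul_eq_mul]
          exact mul_nonpos_of_nonneg_of_nonpos (inv_pos.mpr hpos).le (hz i)
        · rw [map_smul, smul_eq_mul]
          exact mul_pos (inv_pos.mpr hpos) hcz
        · rw [map_smul, smul_eq_mul]
          exact inv_mul_cancel₀ hpos.ne'
      obtain ⟨lam, hlam, hsum⟩ :=
        ih (fun i => a i.succ - a i.succ x₀ • a 0) (c - c x₀ • a 0) (by
          intro x hx
          have hy := hc (x - a 0 x • x₀) (Fin.cases (by simp [hone]) (fun i => by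
            have := hx i
            simp only [LinearMap.sub_apply, LinearMap.smul_apply, smul_eq_mul] at this
            simp only [map_sub, map_smul, smul_eq_mul]
            linarith))
          simp only [map_sub, map_smul, smul_eq_mul] at hy
          simp only [LinearMap.sub_apply, LinearMap.smul_apply, smul_eq_mul]
          linarith)
      refine ⟨Fin.cons (c x₀ - ∑ i, lam i * a i.succ x₀) lam, fun i => ?_, fun x => ?_⟩
      · refine Fin.cases ?_ (fun j => ?_) i
        · have : ∑ i, lam i * a i.succ x₀ ≤ 0 :=
            Finset.sum_nonpos fun i _ => mul_nonpos_of_nonneg_of_nonpos (hlam i) (hx₀ i)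
          simp only [Pi.zero_apply, Fin.cons_zero]
          linarith
        · simpa using hlam j
      · have h1 := hsum x
        simp only [LinearMap.sub_apply, LinearMap.smul_apply, smul_eq_mul, mul_sub,
          Finset.sum_sub_distrib, ← mul_assoc] at h1
        rw [← Finset.sum_mul] at h1
        simp only [Fin.sum_univ_succ, Fin.cons_zero, Fin.cons_succ]
        linarith

/-- Affine Farkas lemma: a linear inequality valid on a nonempty polyhedron is a nonnegative
combination of the defining inequalities, up to weakening the right-hand side. -/
theorem farkas_affine {m n : ℕ} (A : Matrix (Fin m) (Fin n) ℝ) (b : Fin m → ℝ)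
    (hP : ∃ d : Fin n → ℝ, A *ᵥ d ≤ b) (w : Fin n → ℝ) (β : ℝ)
    (hw : ∀ d : Fin n → ℝ, A *ᵥ d ≤ b → w ⬝ᵥ d ≤ β) :
    ∃ lam : Fin m → ℝ, 0 ≤ lam ∧ Aᵀ *ᵥ lam = w ∧ b ⬝ᵥ lam ≤ β := by
  obtain ⟨d₀, hd₀⟩ := hP
  let row : Fin m → (Fin n → ℝ) × ℝ →ₗ[ℝ] ℝ := fun i =>
    (LinearMap.proj i ∘ₗ A.mulVecLin) ∘ₗ LinearMap.fst ℝ _ _ - b i • LinearMap.snd ℝ _ _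
  let c : (Fin n → ℝ) × ℝ →ₗ[ℝ] ℝ :=
    dotProductBilin ℝ ℝ w ∘ₗ LinearMap.fst ℝ _ _ - β • LinearMap.snd ℝ _ _
  have hrow : ∀ i d t, row i (d, t) = (A *ᵥ d) i - b i * t := fun i d t => by simp [row]
  have hcdef : ∀ d t, c (d, t) = w ⬝ᵥ d - β * t := fun d t => by
    simp [c, dotProductBilin]
  obtain ⟨mu, hmu, hsum⟩ := farkas_functionals (m + 1)
    (Fin.cons (-LinearMap.snd ℝ _ _) row) c (by
      rintro ⟨d, t⟩ hx
      have ht : 0 ≤ t := by simpa using hx 0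
      have hd : ∀ i, (A *ᵥ d) i ≤ b i * t := fun i => by
        have := hx i.succ
        rw [Fin.cons_succ, hrow] at this
        linarith
      rw [hcdef]
      rcases ht.eq_or_lt with rfl | ht
      · have hray : ∀ s : ℝ, 0 ≤ s → w ⬝ᵥ d₀ + s * (w ⬝ᵥ d) ≤ β := fun s hs => by
          have := hw (d₀ + s • d) (fun i => by
            have h1 := mul_nonneg hs (sub_nonneg.mpr (hd i))
            have h2 := hd₀ i
            simp only [mulVec_add, mulVec_smul, Pi.add_apply, Pi.smul_apply, smul_eq_mul]
            linarith)
          simpa [dotProduct_add, dotProduct_smul] using this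
        by_contra hneg
        have hpos : 0 < w ⬝ᵥ d := by linarith
        -- At this step length the objective equals `β + 1`.
        have h0 := hw d₀ hd₀
        have := hray ((β - w ⬝ᵥ d₀ + 1) / (w ⬝ᵥ d)) (div_nonneg (by linarith) hpos.le)
        rw [div_mul_cancel₀ _ hpos.ne'] at this
        linarith
      · have := hw (t⁻¹ • d) (fun i => by
          simp only [mulVec_smul, Pi.smul_apply, smul_eq_mul]
          rw [inv_mul_le_iff₀ ht, mul_comm]
          exact hd i)
        rw [dotProduct_smul, smul_eq_mul, inv_mul_le_iff₀ ht] at this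
        linarith)
  have key : ∀ d t, w ⬝ᵥ d - β * t = -(mu 0 * t)
      + ∑ i : Fin m, mu i.succ * ((A *ᵥ d) i - b i * t) := fun d t => by
    have := hsum (d, t)
    simpa [Fin.sum_univ_succ, hcdef, hrow] using this
  refine ⟨fun i => mu i.succ, fun i => hmu _, ?_, ?_⟩
  · refine dotProduct_eq _ _ fun d => ?_
    have := key d 0
    simp only [mul_zero, sub_zero, neg_zero, zero_add] at this
    rw [this, mulVec_transpose, ← dotProduct_mulVec]
    rfl
  · have := key 0 1
    have h0 := hmu 0
    simp only [dotProduct_zero, mulVec_zero, Pi.zero_apply, mul_one, zero_sub, mul_neg,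
      Finset.sum_neg_distrib] at this h0
    have hb : b ⬝ᵥ (fun i => mu i.succ) = ∑ i : Fin m, mu i.succ * b i := by
      rw [dotProduct_comm]
      rfl
    linarith

/-- Per-constraint AARC reformulation (Theorem 1 of the paper): under affine decision
rules `f = η₀ + H ⬝ d`, the robust constraint `u ⬝ᵥ (η₀ + H ⬝ d) + v ⬝ᵥ d ≤ h` over the
nonempty polyhedron `{d : A ⬝ d ≤ b}` holds iff there is `lam ≥ 0` with
`Aᵀ ⬝ lam = Hᵀ ⬝ u + v` and `u ⬝ᵥ η₀ + b ⬝ᵥ lam ≤ h`. -/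
theorem aarc_constraint_iff_dual (m n p : ℕ) (A : Matrix (Fin m) (Fin n) ℝ)
    (b : Fin m → ℝ) (hP : ∃ d : Fin n → ℝ, A.mulVec d ≤ b)
    (η₀ : Fin p → ℝ) (H : Matrix (Fin p) (Fin n) ℝ)
    (u : Fin p → ℝ) (v : Fin n → ℝ) (h : ℝ) :
    (∀ d : Fin n → ℝ, A.mulVec d ≤ b → u ⬝ᵥ (η₀ + H.mulVec d) + v ⬝ᵥ d ≤ h) ↔
      ∃ lam : Fin m → ℝ, 0 ≤ lam ∧ Aᵀ.mulVec lam = Hᵀ.mulVec u + v ∧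
        u ⬝ᵥ η₀ + b ⬝ᵥ lam ≤ h := by
  have hobj : ∀ d : Fin n → ℝ,
      u ⬝ᵥ (η₀ + H *ᵥ d) + v ⬝ᵥ d = u ⬝ᵥ η₀ + (Hᵀ *ᵥ u + v) ⬝ᵥ d := fun d => by
    rw [dotProduct_add, add_dotProduct, mulVec_transpose, ← dotProduct_mulVec, add_assoc]
  constructor
  · intro hrob
    obtain ⟨lam, h0, h1, h2⟩ := farkas_affine A b hP (Hᵀ *ᵥ u + v) (h - u ⬝ᵥ η₀) (fun d hd => by
      have := hrob d hd
      rw [hobj] at this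
      linarith)
    exact ⟨lam, h0, h1, by linarith⟩
  · rintro ⟨lam, h0, h1, h2⟩ d hd
    have hle : lam ⬝ᵥ (A *ᵥ d) ≤ lam ⬝ᵥ b := dotProduct_le_dotProduct_of_nonneg_left hd h0
    rw [hobj, ← h1, mulVec_transpose, ← dotProduct_mulVec]
    rw [dotProduct_comm b] at h2
    linarith
end

section
/- Let A be a real m×n matrix and b ∈ ℝ^m such that the polyhedron P = {d ∈ ℝ^n : A·d ≤ b} is nonempty. Let F be a real q×p matrix, G a real q×n matrix, h ∈ ℝ^q and x ∈ ℝ^p. Then the system of uncertain constraints F·x + G·d ≤ h (componentwise) holds for every d ∈ P if and only if there exists a q×m matrix Λ with all entries nonnegative such that Λ·A = G and F·x + Λ·b ≤ h (componentwise). Consequently, robust (semi-infinite) feasibility of a finite system of affine constraints under polyhedral uncertainty is equivalent to feasibility of a finite system of linear constraints in (x, Λ). -/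
/-!
The constraints decouple row by row, so the theorem is the affine Farkas lemma
(`affine_farkas`): if `g ⬝ᵥ d ≤ c` holds on the nonempty polyhedron `A d ≤ b`, then `g` is a
nonnegative combination `l` of the rows of `A` with `l ⬝ᵥ b ≤ c`. Choosing such an `l` for each
row gives the multiplier matrix; the converse is weak duality.

The affine version follows by homogenization from the conic Farkas lemma for finitely many linear
functionals (`farkas_linear`): on pairs `(d, t)`, the inequalities `A d ≤ t b` and `0 ≤ t` imply
`g ⬝ᵥ d ≤ t c`. For `t > 0` this is the hypothesis at `d / t`; for `t = 0` the vector `d` is a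
recession direction of the polyhedron, and nonemptiness forces `g ⬝ᵥ d ≤ 0`. The conic lemma
is proved algebraically, by induction on the number of functionals, so that closedness of
finitely generated cones is not needed.
-/

open Matrix

/-- **Farkas' lemma** for finitely many linear functionals on a real vector space. In the
inductive step, if the last functional `aₘ` is really needed, there is a point `x₀` with
`aₘ x₀ > 0`, and the induction hypothesis is applied to the functionals precomposed with the
projection onto `ker aₘ` along `x₀`. -/
lemma farkas_linear {V : Type*} [AddCommGroup V] [Module ℝ V] (m : ℕ) :
    ∀ (a : Fin m → V →ₗ[ℝ] ℝ) (g : V →ₗ[ℝ] ℝ),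
      (∀ x, (∀ i, a i x ≤ 0) → g x ≤ 0) →
      ∃ l : Fin m → ℝ, (∀ i, 0 ≤ l i) ∧ ∀ x, g x = ∑ i, l i * a i x := by
  induction m with
  | zero =>
    intro a g H
    refine ⟨fun _ => 0, fun _ => le_rfl, fun x => ?_⟩
    have h1 := H x (fun i => i.elim0)
    have h2 := H (-x) (fun i => i.elim0)
    rw [map_neg] at h2
    simp
    linarith
  | succ m ih =>
    intro a g H
    by_cases hc : ∀ x, (∀ i : Fin m, a i.castSucc x ≤ 0) → g x ≤ 0
    · obtain ⟨l, hl, hg⟩ := ih (fun i => a i.castSucc) g hc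
      refine ⟨Fin.snoc l 0, fun i => ?_, fun x => ?_⟩
      · refine Fin.lastCases ?_ (fun i => ?_) i
        · simp
        · simpa using hl i
      · rw [Fin.sum_univ_castSucc]
        simpa using hg x
    · push Not at hc
      obtain ⟨x₀, hx₀, hgx₀⟩ := hc
      have hs : 0 < a (Fin.last m) x₀ := by
        by_contra hn
        have := H x₀ (fun i => Fin.lastCases (not_lt.mp hn) hx₀ i)
        linarith
      set s := a (Fin.last m) x₀ with hs_def
      obtain ⟨l, hl, hg⟩ := ih
        (fun i => a i.castSucc - (a i.castSucc x₀ / s) • a (Fin.last m))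
        (g - (g x₀ / s) • a (Fin.last m)) (fun x hx => by
          -- `H` is used at the projection of `x` onto the kernel of the last functional along `x₀`.
          have key := H (x - (a (Fin.last m) x / s) • x₀) (fun i => by
            refine Fin.lastCases ?_ (fun i => ?_) i
            · rw [map_sub, map_smul, smul_eq_mul, ← hs_def, div_mul_cancel₀ _ hs.ne', sub_self]
            · have := hx i
              simp only [LinearMap.sub_apply, LinearMap.smul_apply, smul_eq_mul] at this
              rw [map_sub, map_smul, smul_eq_mul]
              calc _ = _ := by ring
                _ ≤ 0 := this)
          rw [map_sub, map_smul, smul_eq_mul] at key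
          simp only [LinearMap.sub_apply, LinearMap.smul_apply, smul_eq_mul]
          calc _ = _ := by ring
            _ ≤ 0 := key)
      refine ⟨Fin.snoc l ((g x₀ - ∑ i, l i * a i.castSucc x₀) / s), fun i => ?_, fun x => ?_⟩
      · refine Fin.lastCases ?_ (fun i => ?_) i
        · rw [Fin.snoc_last]
          refine div_nonneg ?_ hs.le
          have : ∑ i, l i * a i.castSucc x₀ ≤ 0 :=
            Finset.sum_nonpos fun i _ => mul_nonpos_of_nonneg_of_nonpos (hl i) (hx₀ i)
          linarith
        · simpa using hl i
      · have h1 := hg x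
        simp only [LinearMap.sub_apply, LinearMap.smul_apply, smul_eq_mul, mul_sub,
          Finset.sum_sub_distrib] at h1
        have h2 : ∑ i, l i * (a i.castSucc x₀ / s * a (Fin.last m) x)
            = (∑ i, l i * a i.castSucc x₀) / s * a (Fin.last m) x := by
          rw [Finset.sum_div, Finset.sum_mul]
          exact Finset.sum_congr rfl fun i _ => by ring
        rw [h2] at h1
        rw [Fin.sum_univ_castSucc]
        simp only [Fin.snoc_castSucc, Fin.snoc_last, sub_div, sub_mul]
        linarith

/-- **Affine Farkas lemma**: an inequality valid on a nonempty polyhedron is a nonnegative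
combination of the defining inequalities, up to weakening the right-hand side. -/
lemma affine_farkas {m n : ℕ} (A : Matrix (Fin m) (Fin n) ℝ) (b : Fin m → ℝ)
    (hP : ∃ d : Fin n → ℝ, A.mulVec d ≤ b) (g : Fin n → ℝ) (c : ℝ)
    (H : ∀ d : Fin n → ℝ, A.mulVec d ≤ b → g ⬝ᵥ d ≤ c) :
    ∃ l : Fin m → ℝ, (∀ j, 0 ≤ l j) ∧ l ᵥ* A = g ∧ l ⬝ᵥ b ≤ c := by
  obtain ⟨d₀, hd₀⟩ := hP
  -- The homogenized functional `(d, t) ↦ v ⬝ᵥ d - r * t`.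
  let φ : (Fin n → ℝ) → ℝ → ((Fin n → ℝ) × ℝ →ₗ[ℝ] ℝ) := fun v r =>
    (dotProductBilin ℝ ℝ v).comp (LinearMap.fst ℝ _ _) - r • LinearMap.snd ℝ _ _
  have hφ : ∀ v r d t, φ v r (d, t) = v ⬝ᵥ d - r * t := fun v r d t => rfl
  obtain ⟨l, hl, hg⟩ := farkas_linear (m + 1)
    (Fin.snoc (fun i => φ (A i) (b i)) (φ 0 1)) (φ g c) (by
      rintro ⟨d, t⟩ hx
      have ht : 0 ≤ t := by
        have := hx (Fin.last m)
        rw [Fin.snoc_last, hφ] at this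
        simpa using this
      have hA : ∀ i, A i ⬝ᵥ d ≤ b i * t := fun i => by
        have := hx i.castSucc
        rw [Fin.snoc_castSucc, hφ] at this
        linarith
      rw [hφ]
      rcases ht.eq_or_lt with rfl | ht
      · simp only [mul_zero, sub_zero] at hA ⊢
        have hray : ∀ s : ℝ, 0 ≤ s → g ⬝ᵥ d₀ + s * (g ⬝ᵥ d) ≤ c := fun s hs => by
          have := H (d₀ + s • d) (fun i => by
            have h0 : A i ⬝ᵥ d₀ ≤ b i := hd₀ i
            have h1 := mul_nonpos_of_nonneg_of_nonpos hs (hA i)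
            change A i ⬝ᵥ (d₀ + s • d) ≤ b i
            rw [dotProduct_add, dotProduct_smul, smul_eq_mul]
            linarith)
          rwa [dotProduct_add, dotProduct_smul, smul_eq_mul] at this
        by_contra hn
        rw [not_le] at hn
        -- At this `s`, the left side of `hray` equals `c + 1`.
        have h0 : g ⬝ᵥ d₀ ≤ c := H d₀ hd₀
        have := hray ((c + 1 - g ⬝ᵥ d₀) / (g ⬝ᵥ d)) (div_nonneg (by linarith) hn.le)
        rw [div_mul_cancel₀ _ hn.ne'] at this
        linarith
      · have := H (t⁻¹ • d) (fun i => by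
          change A i ⬝ᵥ (t⁻¹ • d) ≤ b i
          rw [dotProduct_smul, smul_eq_mul, inv_mul_le_iff₀ ht, mul_comm]
          exact hA i)
        rw [dotProduct_smul, smul_eq_mul, inv_mul_le_iff₀ ht] at this
        linarith)
  refine ⟨fun i => l i.castSucc, fun i => hl _, ?_, ?_⟩
  · ext j
    have := hg (Pi.single j 1, 0)
    rw [Fin.sum_univ_castSucc] at this
    simp only [Fin.snoc_castSucc, Fin.snoc_last, hφ] at this
    simp only [dotProduct_single, mul_one, mul_zero, sub_zero, Pi.zero_apply, add_zero] at this
    exact this.symm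
  · have := hg (0, 1)
    rw [Fin.sum_univ_castSucc] at this
    simp only [Fin.snoc_castSucc, Fin.snoc_last, hφ] at this
    simp only [dotProduct_zero, mul_one, zero_sub, mul_neg, Finset.sum_neg_distrib] at this
    have h1 := hl (Fin.last m)
    change ∑ i : Fin m, l i.castSucc * b i ≤ c
    linarith

/-- Generic content of Theorem 1: robust feasibility of the finite affine system
`F ⬝ x + G ⬝ d ≤ h` for all `d` in the nonempty polyhedron `{d : A ⬝ d ≤ b}` is
equivalent to the existence of a nonnegative multiplier matrix `L` with `L * A = G`
and `F ⬝ x + L ⬝ b ≤ h`, i.e. a finite system of linear constraints in `(x, L)`. -/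
theorem robust_system_iff_dual (m n p q : ℕ) (A : Matrix (Fin m) (Fin n) ℝ)
    (b : Fin m → ℝ) (hP : ∃ d : Fin n → ℝ, A.mulVec d ≤ b)
    (F : Matrix (Fin q) (Fin p) ℝ) (G : Matrix (Fin q) (Fin n) ℝ)
    (h : Fin q → ℝ) (x : Fin p → ℝ) :
    (∀ d : Fin n → ℝ, A.mulVec d ≤ b → F.mulVec x + G.mulVec d ≤ h) ↔
      ∃ L : Matrix (Fin q) (Fin m) ℝ, (∀ i j, 0 ≤ L i j) ∧ L * A = G ∧
        F.mulVec x + L.mulVec b ≤ h := by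
  constructor
  · intro H
    have hrow : ∀ i, ∃ l : Fin m → ℝ, (∀ j, 0 ≤ l j) ∧ l ᵥ* A = G i ∧
        l ⬝ᵥ b ≤ h i - F.mulVec x i := fun i =>
      affine_farkas A b hP (G i) _ fun d hd => by
        have : F.mulVec x i + G i ⬝ᵥ d ≤ h i := H d hd i
        linarith
    choose L hL hLA hLb using hrow
    refine ⟨L, hL, ?_, fun i => ?_⟩
    · ext i j
      exact congrFun (hLA i) j
    · have := hLb i
      change F.mulVec x i + L i ⬝ᵥ b ≤ h i
      linarith
  · rintro ⟨L, hL, rfl, hLb⟩ d hd i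
    have h1 : F.mulVec x i + L i ⬝ᵥ b ≤ h i := hLb i
    have h2 : L i ⬝ᵥ A.mulVec d ≤ L i ⬝ᵥ b := dotProduct_le_dotProduct_of_nonneg_left hd (hL i)
    rw [← mulVec_mulVec]
    change F.mulVec x i + L i ⬝ᵥ A.mulVec d ≤ h i
    linarith
end
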